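/- arXiv:2108.11328 — 2 statements merged into one kernel-verified Lean document; each statement's English description precedes it below -/
import Mathlib

section
/- Deterministic core of the oracle-inequality proof: let a₁, a₂ > 0, set s = √(log(ep)/n), τ = 2 a₁ σ (r_n + s) and λ̃ = 4 a₂ σ (r_n² + r_n s). Suppose f ∈ C_gr and the realization of ε satisfies (ε, f̂ − f)_n ≤ a₁ σ (r_n + s) ‖f̂ − f‖_n + a₂ σ (r_n² + r_n s) Ω̃_gr(f̂ − f), where Ω̃_gr(f̂ − f) is computed from the componentwise difference of the chosen representations of f̂ and f. Then ‖f̂ − f*‖²_n + 2 λ_n Ω_gr(f̂) + 2 μ_n G(f̂) ≤ 3 ‖f − f*‖²_n + 2 τ² + λ̃ [ Ω̃_gr(f̂) + Ω̃_gr(f) ] + 2 λ_n Ω_gr(f) + 2 μ_n G(f). -/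
open MeasureTheory ProbabilityTheory

noncomputable section

namespace Census

structure AddRep (p : ℕ) where
  main : Fin p → ℝ → ℝ
  inter : Fin p → Fin p → ℝ → ℝ → ℝ
  smooth_main : ∀ j, ContDiff ℝ 2 (main j)
  smooth_inter : ∀ j k, ContDiff ℝ 2 (fun q : ℝ × ℝ => inter j k q.1 q.2)

namespace AddRep
variable {p : ℕ}

def toFun (R : AddRep p) (x : Fin p → ℝ) : ℝ :=
  (∑ j, R.main j (x j)) + ∑ j, ∑ k, if j < k then R.inter j k (x j) (x k) else 0

def Gcount (R : AddRep p) : ℕ :=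
  Nat.card {j : Fin p // R.main j ≠ 0} +
    Nat.card {q : Fin p × Fin p // q.1 < q.2 ∧ R.inter q.1 q.2 ≠ 0}

end AddRep

def Omega1 (h : ℝ → ℝ) : ℝ := ∫ u in (0:ℝ)..1, (iteratedDeriv 2 h u) ^ 2

def Omega2 (g : ℝ → ℝ → ℝ) : ℝ :=
  ∫ q in (Set.Icc (0:ℝ) 1) ×ˢ (Set.Icc (0:ℝ) 1),
    ((iteratedDeriv 2 (fun t => g t q.2) q.1) ^ 2
      + (deriv (fun t => deriv (g t) q.2) q.1) ^ 2
      + (iteratedDeriv 2 (g q.1) q.2) ^ 2)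

def OmegaGr {p : ℕ} (R : AddRep p) : ℝ :=
  (∑ j, Omega1 (R.main j)) + ∑ j, ∑ k, if j < k then Omega2 (R.inter j k) else 0

def OmegaTildeGr {p : ℕ} (R : AddRep p) : ℝ :=
  (∑ j, Real.sqrt (Omega1 (R.main j))) +
    ∑ j, ∑ k, if j < k then Real.sqrt (Omega2 (R.inter j k)) else 0

def evalVec {n p : ℕ} (x : Fin n → Fin p → ℝ) (R : AddRep p) : Fin n → ℝ :=
  fun i => R.toFun (x i)

def normSqN {n : ℕ} (v : Fin n → ℝ) : ℝ := (1 / n) * ∑ i, v i ^ 2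

def normN {n : ℕ} (v : Fin n → ℝ) : ℝ := Real.sqrt (normSqN v)

def innerN {n : ℕ} (u v : Fin n → ℝ) : ℝ := (1 / n) * ∑ i, u i * v i

def objective {n p : ℕ} (x : Fin n → Fin p → ℝ) (y : Fin n → ℝ) (lam mu : ℝ)
    (R : AddRep p) : ℝ :=
  normSqN (fun i => y i - evalVec x R i) + lam * OmegaGr R + mu * (R.Gcount : ℝ)

def IsMinimizer {n p : ℕ} (K : ℕ) (x : Fin n → Fin p → ℝ) (y : Fin n → ℝ)
    (lam mu : ℝ) (Rhat : AddRep p) : Prop :=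
  Rhat.Gcount ≤ K ∧ ∀ R : AddRep p, R.Gcount ≤ K →
    objective x y lam mu Rhat ≤ objective x y lam mu R

def rn (n : ℕ) : ℝ := (n : ℝ) ^ (-(1/3) : ℝ)

def logep (p : ℕ) : ℝ := Real.log (Real.exp 1 * p)

def gaussMeasure (n : ℕ) (σ : ℝ) : Measure (Fin n → ℝ) :=
  Measure.pi fun _ : Fin n => gaussianReal 0 ⟨σ ^ 2, sq_nonneg σ⟩

end Census

namespace Census

/-- `Ω̃_gr` of the componentwise difference of two chosen representations. -/
def OmegaTildeSub {p : ℕ} (R1 R2 : AddRep p) : ℝ :=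
  (∑ j, Real.sqrt (Omega1 (fun u => R1.main j u - R2.main j u))) +
    ∑ j, ∑ k, if j < k then
      Real.sqrt (Omega2 (fun u v => R1.inter j k u v - R2.inter j k u v)) else 0

end Census

namespace Census

lemma sqrt_int_tri {X : Type*} [MeasurableSpace X] (μ : Measure X) (a b c : X → ℝ)
    (ha : Integrable a μ) (hb : Integrable b μ) (hc : Integrable c μ)
    (ha0 : ∀ x, 0 ≤ a x) (hb0 : ∀ x, 0 ≤ b x)
    (h : ∀ α β : ℝ, 0 < α → 0 < β → ∀ x, c x ≤ (α + β) * (a x / α + b x / β)) :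
    Real.sqrt (∫ x, c x ∂μ) ≤ Real.sqrt (∫ x, a x ∂μ) + Real.sqrt (∫ x, b x ∂μ) := by
  have hA : 0 ≤ ∫ x, a x ∂μ := integral_nonneg ha0
  have hB : 0 ≤ ∫ x, b x ∂μ := integral_nonneg hb0
  apply le_of_forall_pos_le_add
  intro δ hδ
  set A := ∫ x, a x ∂μ
  set B := ∫ x, b x ∂μ
  have hα : 0 < Real.sqrt A + δ / 2 := by positivity
  have hβ : 0 < Real.sqrt B + δ / 2 := by positivity
  have hα2 : A ≤ (Real.sqrt A + δ / 2) ^ 2 := by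
    nlinarith [Real.sq_sqrt hA, Real.sqrt_nonneg A]
  have hβ2 : B ≤ (Real.sqrt B + δ / 2) ^ 2 := by
    nlinarith [Real.sq_sqrt hB, Real.sqrt_nonneg B]
  have hsum : Real.sqrt A + Real.sqrt B + δ
      = (Real.sqrt A + δ / 2) + (Real.sqrt B + δ / 2) := by ring
  rw [hsum]
  generalize Real.sqrt A + δ / 2 = α at *
  generalize Real.sqrt B + δ / 2 = β at *
  apply Real.sqrt_le_iff.2
  refine ⟨by positivity, ?_⟩
  have h1 : ∫ x, c x ∂μ ≤ ∫ x, (α + β) * (a x / α + b x / β) ∂μ :=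
    integral_mono hc (((ha.div_const α).add (hb.div_const β)).const_mul _) (h α β hα hβ)
  have h2 : ∫ x, (α + β) * (a x / α + b x / β) ∂μ = (α + β) * (A / α + B / β) := by
    rw [integral_const_mul, integral_add (ha.div_const α) (hb.div_const β),
      integral_div, integral_div]
  have h3 : A / α ≤ α := by rw [div_le_iff₀ hα]; nlinarith
  have h4 : B / β ≤ β := by rw [div_le_iff₀ hβ]; nlinarith
  rw [h2] at h1
  nlinarith [mul_le_mul_of_nonneg_left (add_le_add h3 h4) (add_pos hα hβ).le]

lemma sq_sub_le_ab (u v α β : ℝ) (hα : 0 < α) (hβ : 0 < β) :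
    (u - v) ^ 2 ≤ (α + β) * (u ^ 2 / α + v ^ 2 / β) := by
  have : (α + β) * (u ^ 2 / α + v ^ 2 / β) - (u - v) ^ 2 = (β * u + α * v) ^ 2 / (α * β) := by
    field_simp
    ring
  have h2 : 0 ≤ (β * u + α * v) ^ 2 / (α * β) := by positivity
  linarith

lemma omega1_tri (f g : ℝ → ℝ) (hf : ContDiff ℝ 2 f) (hg : ContDiff ℝ 2 g) :
    Real.sqrt (Omega1 (fun u => f u - g u)) ≤ Real.sqrt (Omega1 f) + Real.sqrt (Omega1 g) := by
  have hs : ∀ u, iteratedDeriv 2 (fun u => f u - g u) u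
      = iteratedDeriv 2 f u - iteratedDeriv 2 g u := fun u =>
    iteratedDeriv_fun_sub hf.contDiffAt hg.contDiffAt
  have cf : Continuous (iteratedDeriv 2 f) := hf.continuous_iteratedDeriv 2 le_rfl
  have cg : Continuous (iteratedDeriv 2 g) := hg.continuous_iteratedDeriv 2 le_rfl
  have key : ∀ F : ℝ → ℝ, Continuous F → Integrable F (volume.restrict (Set.Ioc (0:ℝ) 1)) := by
    intro F hF
    exact (hF.integrableOn_Icc).mono_set Set.Ioc_subset_Icc_self
  unfold Omega1
  simp only [hs, intervalIntegral.integral_of_le zero_le_one]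
  apply sqrt_int_tri
  · exact key _ (by fun_prop)
  · exact key _ (by fun_prop)
  · exact key _ (by fun_prop)
  · intro x; positivity
  · intro x; positivity
  · intro α β hα hβ x
    exact sq_sub_le_ab _ _ _ _ hα hβ

lemma hasD1 (G : ℝ × ℝ → ℝ) (hG : Differentiable ℝ G) (x y : ℝ) :
    HasDerivAt (fun t => G (t, y)) (fderiv ℝ G (x, y) (1, 0)) x := by
  have h1 : HasDerivAt (fun t : ℝ => (t, y)) ((1, 0) : ℝ × ℝ) x :=
    (hasDerivAt_id x).prodMk (hasDerivAt_const x y)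
  exact (hG (x, y)).hasFDerivAt.comp_hasDerivAt x h1

lemma hasD2 (G : ℝ × ℝ → ℝ) (hG : Differentiable ℝ G) (x y : ℝ) :
    HasDerivAt (fun t => G (x, t)) (fderiv ℝ G (x, y) (0, 1)) y := by
  have h1 : HasDerivAt (fun t : ℝ => (x, t)) ((0, 1) : ℝ × ℝ) y :=
    (hasDerivAt_const y x).prodMk (hasDerivAt_id y)
  exact (hG (x, y)).hasFDerivAt.comp_hasDerivAt y h1

/-- second directional derivative -/
def DD (G : ℝ × ℝ → ℝ) (v w : ℝ × ℝ) (q : ℝ × ℝ) : ℝ :=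
  fderiv ℝ (fun z => fderiv ℝ G z v) q w

lemma cd_dir (G : ℝ × ℝ → ℝ) (hG : ContDiff ℝ 2 G) (v : ℝ × ℝ) :
    ContDiff ℝ 1 (fun z => fderiv ℝ G z v) :=
  (hG.fderiv_right (m := 1) (by norm_num)).clm_apply contDiff_const

lemma cont_DD (G : ℝ × ℝ → ℝ) (hG : ContDiff ℝ 2 G) (v w : ℝ × ℝ) : Continuous (DD G v w) :=
  ((cd_dir G hG v).continuous_fderiv (by norm_num)).clm_apply continuous_const

lemma DD_sub (F G : ℝ × ℝ → ℝ) (hF : ContDiff ℝ 2 F) (hG : ContDiff ℝ 2 G) (v w q : ℝ × ℝ) :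
    DD (fun z => F z - G z) v w q = DD F v w q - DD G v w q := by
  unfold DD
  have h1 : (fun z => fderiv ℝ (fun z => F z - G z) z v)
      = fun z => fderiv ℝ F z v - fderiv ℝ G z v := by
    funext z
    rw [fderiv_fun_sub (hF.differentiable (by norm_num) z) (hG.differentiable (by norm_num) z)]
    rfl
  rw [h1, fderiv_fun_sub ((cd_dir F hF v).differentiable (by norm_num) q)
    ((cd_dir G hG v).differentiable (by norm_num) q)]
  rfl

lemma omega2_eq (g : ℝ → ℝ → ℝ) (hg : ContDiff ℝ 2 (fun q : ℝ × ℝ => g q.1 q.2)) :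
    Omega2 g = ∫ q in (Set.Icc (0:ℝ) 1) ×ˢ (Set.Icc (0:ℝ) 1),
      ((DD (fun q : ℝ × ℝ => g q.1 q.2) (1, 0) (1, 0) q) ^ 2
        + (DD (fun q : ℝ × ℝ => g q.1 q.2) (0, 1) (1, 0) q) ^ 2
        + (DD (fun q : ℝ × ℝ => g q.1 q.2) (0, 1) (0, 1) q) ^ 2) := by
  unfold Omega2
  have hd := hg.differentiable (by norm_num)
  have e1 : ∀ x y, deriv (fun t => g t y) x = fderiv ℝ (fun q : ℝ × ℝ => g q.1 q.2) (x, y) (1, 0) :=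
    fun x y => (hasD1 _ hd x y).deriv
  have e2 : ∀ x y, deriv (g x) y = fderiv ℝ (fun q : ℝ × ℝ => g q.1 q.2) (x, y) (0, 1) :=
    fun x y => (hasD2 _ hd x y).deriv
  have f1 := fun v => (cd_dir _ hg v).differentiable (by norm_num)
  congr 1
  funext q
  have a1 : iteratedDeriv 2 (fun t => g t q.2) q.1
      = DD (fun q : ℝ × ℝ => g q.1 q.2) (1, 0) (1, 0) q := by
    rw [iteratedDeriv_succ, iteratedDeriv_one]
    have : deriv (fun t => g t q.2)
        = fun t => fderiv ℝ (fun q : ℝ × ℝ => g q.1 q.2) (t, q.2) (1, 0) := by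
      funext t; exact e1 t q.2
    rw [this]
    exact (hasD1 _ (f1 (1, 0)) q.1 q.2).deriv
  have a2 : deriv (fun t => deriv (g t) q.2) q.1
      = DD (fun q : ℝ × ℝ => g q.1 q.2) (0, 1) (1, 0) q := by
    simp only [e2]
    exact (hasD1 _ (f1 (0, 1)) q.1 q.2).deriv
  have a3 : iteratedDeriv 2 (g q.1) q.2
      = DD (fun q : ℝ × ℝ => g q.1 q.2) (0, 1) (0, 1) q := by
    rw [iteratedDeriv_succ, iteratedDeriv_one]
    have : deriv (g q.1)
        = fun t => fderiv ℝ (fun q : ℝ × ℝ => g q.1 q.2) (q.1, t) (0, 1) := by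
      funext t; exact e2 q.1 t
    rw [this]
    exact (hasD2 _ (f1 (0, 1)) q.1 q.2).deriv
  rw [a1, a2, a3]

lemma omega2_tri (f g : ℝ → ℝ → ℝ) (hf : ContDiff ℝ 2 (fun q : ℝ × ℝ => f q.1 q.2))
    (hg : ContDiff ℝ 2 (fun q : ℝ × ℝ => g q.1 q.2)) :
    Real.sqrt (Omega2 (fun u v => f u v - g u v))
      ≤ Real.sqrt (Omega2 f) + Real.sqrt (Omega2 g) := by
  rw [omega2_eq f hf, omega2_eq g hg, omega2_eq _ (hf.sub hg)]
  simp only [DD_sub _ _ hf hg]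
  have cf := cont_DD _ hf
  have cg := cont_DD _ hg
  have key : ∀ F : ℝ × ℝ → ℝ, Continuous F →
      Integrable F (volume.restrict ((Set.Icc (0:ℝ) 1) ×ˢ (Set.Icc (0:ℝ) 1))) := by
    intro F hF
    exact hF.continuousOn.integrableOn_compact (isCompact_Icc.prod isCompact_Icc)
  have cf1 := cf (1, 0) (1, 0)
  have cf2 := cf (0, 1) (1, 0)
  have cf3 := cf (0, 1) (0, 1)
  have cg1 := cg (1, 0) (1, 0)
  have cg2 := cg (0, 1) (1, 0)
  have cg3 := cg (0, 1) (0, 1)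
  apply sqrt_int_tri
  · exact key _ (by fun_prop)
  · exact key _ (by fun_prop)
  · exact key _ (by fun_prop)
  · intro x; positivity
  · intro x; positivity
  · intro α β hα hβ x
    refine (add_le_add (add_le_add (sq_sub_le_ab _ _ _ _ hα hβ) (sq_sub_le_ab _ _ _ _ hα hβ))
      (sq_sub_le_ab _ _ _ _ hα hβ)).trans (le_of_eq ?_)
    ring

lemma omegaTilde_tri {p : ℕ} (R1 R2 : AddRep p) :
    OmegaTildeSub R1 R2 ≤ OmegaTildeGr R1 + OmegaTildeGr R2 := by
  unfold OmegaTildeSub OmegaTildeGr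
  have h1 : (∑ j, Real.sqrt (Omega1 (fun u => R1.main j u - R2.main j u)))
      ≤ (∑ j, Real.sqrt (Omega1 (R1.main j))) + ∑ j, Real.sqrt (Omega1 (R2.main j)) := by
    rw [← Finset.sum_add_distrib]
    exact Finset.sum_le_sum fun j _ => omega1_tri _ _ (R1.smooth_main j) (R2.smooth_main j)
  have h2 : (∑ j, ∑ k, if j < k then
      Real.sqrt (Omega2 (fun u v => R1.inter j k u v - R2.inter j k u v)) else 0)
      ≤ (∑ j, ∑ k, if j < k then Real.sqrt (Omega2 (R1.inter j k)) else 0)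
        + ∑ j, ∑ k, if j < k then Real.sqrt (Omega2 (R2.inter j k)) else 0 := by
    rw [← Finset.sum_add_distrib]
    refine Finset.sum_le_sum fun j _ => ?_
    rw [← Finset.sum_add_distrib]
    refine Finset.sum_le_sum fun k _ => ?_
    split_ifs
    · exact omega2_tri _ _ (R1.smooth_inter j k) (R2.smooth_inter j k)
    · simp
  linarith

lemma normSq_expand {n : ℕ} (u v w e : Fin n → ℝ) :
    normSqN (fun i => w i + e i - u i) - normSqN (fun i => w i + e i - v i)
      = normSqN (fun i => u i - w i) - normSqN (fun i => v i - w i)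
        - 2 * innerN e (fun i => u i - v i) := by
  unfold normSqN innerN
  have : ∑ i, (w i + e i - u i) ^ 2 - ∑ i, (w i + e i - v i) ^ 2
      = ∑ i, (u i - w i) ^ 2 - ∑ i, (v i - w i) ^ 2 - 2 * ∑ i, e i * (u i - v i) := by
    rw [Finset.mul_sum, ← Finset.sum_sub_distrib, ← Finset.sum_sub_distrib,
      ← Finset.sum_sub_distrib]
    exact Finset.sum_congr rfl fun i _ => by ring
  linear_combination (1 / (n : ℝ)) * this

lemma normSq_nonneg {n : ℕ} (u : Fin n → ℝ) : 0 ≤ normSqN u := by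
  unfold normSqN
  positivity

lemma normSq_par {n : ℕ} (u v w : Fin n → ℝ) :
    normSqN (fun i => u i - v i) ≤ 2 * normSqN (fun i => u i - w i)
      + 2 * normSqN (fun i => v i - w i) := by
  unfold normSqN
  have : ∑ i, (u i - v i) ^ 2 ≤ 2 * ∑ i, (u i - w i) ^ 2 + 2 * ∑ i, (v i - w i) ^ 2 := by
    rw [Finset.mul_sum, Finset.mul_sum, ← Finset.sum_add_distrib]
    exact Finset.sum_le_sum fun i _ => by nlinarith [sq_nonneg (u i - w i + (v i - w i))]
  have hn : (0 : ℝ) ≤ 1 / n := by positivity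
  nlinarith [mul_le_mul_of_nonneg_left this hn]

end Census

open Census in
/-- deterministic core of the oracle-inequality proof.  With
`s = √(log(ep)/n)`, `τ = 2a₁σ(rₙ+s)` and `λ̃ = 4a₂σ(rₙ²+rₙs)`, if the noise realization
satisfies `(ε, f̂-f)ₙ ≤ a₁σ(rₙ+s)‖f̂-f‖ₙ + a₂σ(rₙ²+rₙs)Ω̃_gr(f̂-f)`, then
`‖f̂-f*‖ₙ² + 2λₙΩ_gr(f̂) + 2μₙG(f̂)
  ≤ 3‖f-f*‖ₙ² + 2τ² + λ̃[Ω̃_gr(f̂)+Ω̃_gr(f)] + 2λₙΩ_gr(f) + 2μₙG(f)`. -/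
theorem statement9 (n p K : ℕ) (hn : 1 ≤ n) (hp : 1 ≤ p) (hK : 1 ≤ K)
    (x : Fin n → Fin p → ℝ) (hx : ∀ i j, x i j ∈ Set.Icc (0:ℝ) 1)
    (σ : ℝ) (hσ : 0 < σ)
    (fstar ε : Fin n → ℝ) (lam mu : ℝ) (hlam : 0 < lam) (hmu : 0 < mu)
    (Rhat : AddRep p)
    (hmin : IsMinimizer K x (fun i => fstar i + ε i) lam mu Rhat)
    (R : AddRep p) (hR : R.Gcount ≤ K)
    (a₁ a₂ : ℝ) (ha₁ : 0 < a₁) (ha₂ : 0 < a₂)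
    (s τ lamTilde : ℝ)
    (hs : s = Real.sqrt (logep p / n))
    (hτ : τ = 2 * a₁ * σ * (rn n + s))
    (hlamTilde : lamTilde = 4 * a₂ * σ * (rn n ^ 2 + rn n * s))
    (hnoise : innerN ε (fun i => evalVec x Rhat i - evalVec x R i) ≤
      a₁ * σ * (rn n + s) * normN (fun i => evalVec x Rhat i - evalVec x R i)
        + a₂ * σ * (rn n ^ 2 + rn n * s) * OmegaTildeSub Rhat R) :
    normSqN (fun i => evalVec x Rhat i - fstar i)
        + 2 * lam * OmegaGr Rhat + 2 * mu * (Rhat.Gcount : ℝ) ≤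
      3 * normSqN (fun i => evalVec x R i - fstar i) + 2 * τ ^ 2
        + lamTilde * (OmegaTildeGr Rhat + OmegaTildeGr R)
        + 2 * lam * OmegaGr R + 2 * mu * (R.Gcount : ℝ) := by
  have hm := hmin.2 R hR
  unfold objective at hm
  have hex := normSq_expand (evalVec x Rhat) (evalVec x R) fstar ε
  have hpar := normSq_par (evalVec x Rhat) (evalVec x R) fstar
  have htri := omegaTilde_tri Rhat R
  have hrn : 0 ≤ rn n := by unfold rn; positivity
  have hs0 : 0 ≤ s := hs ▸ Real.sqrt_nonneg _
  have hlt : 0 ≤ lamTilde := by rw [hlamTilde]; positivity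
  have h1 := mul_le_mul_of_nonneg_left htri hlt
  have hD : normN (fun i => evalVec x Rhat i - evalVec x R i) ^ 2
      = normSqN (fun i => evalVec x Rhat i - evalVec x R i) := Real.sq_sqrt (normSq_nonneg _)
  have hno : 4 * innerN ε (fun i => evalVec x Rhat i - evalVec x R i)
      ≤ 2 * (τ * normN (fun i => evalVec x Rhat i - evalVec x R i))
        + lamTilde * OmegaTildeSub Rhat R := by
    rw [hτ, hlamTilde]; linarith
  have hyoung : 2 * (τ * normN (fun i => evalVec x Rhat i - evalVec x R i))
      ≤ 2 * τ ^ 2 + normN (fun i => evalVec x Rhat i - evalVec x R i) ^ 2 / 2 := by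
    nlinarith [sq_nonneg (2 * τ - normN (fun i => evalVec x Rhat i - evalVec x R i))]
  linarith
end
end

section
/- Polynomial approximation in sup-norm controlled by the m-th order smoothness seminorm: for every integer m ≥ 2 there exists a constant C depending only on m such that for every m-times continuously differentiable function g : [0,1]² → ℝ there is a polynomial p(u,v) of degree at most m − 1 in each variable with sup_{(u,v) ∈ [0,1]²} |g(u,v) − p(u,v)| ≤ C Ω̃(g). Moreover the decomposition g = p + g̃ satisfies Ω̃(g̃) = Ω̃(g). -/
noncomputable section

namespace Census

/-- Mixed partial derivative `∂^{a+b} g / ∂u^a ∂v^b`. -/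
def pd (a b : ℕ) (g : ℝ → ℝ → ℝ) (u v : ℝ) : ℝ :=
  iteratedDeriv a (fun t => iteratedDeriv b (g t) v) u

/-- `m`-th order smoothness penalty of a bivariate function:
`Ω(g) = Σ_{a+b=m} ‖∂^m g/∂u^a ∂v^b‖²_{L²([0,1]²)}`. -/
def Omega2M (m : ℕ) (g : ℝ → ℝ → ℝ) : ℝ :=
  ∑ a ∈ Finset.range (m + 1),
    ∫ q in (Set.Icc (0:ℝ) 1) ×ˢ (Set.Icc (0:ℝ) 1), (pd a (m - a) g q.1 q.2) ^ 2

/-- `Ω̃(g) = Ω(g)^{1/2}`. -/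
def OmegaTilde2M (m : ℕ) (g : ℝ → ℝ → ℝ) : ℝ := Real.sqrt (Omega2M m g)

end Census

namespace Census

def dd (w : ℝ × ℝ) (F : ℝ × ℝ → ℝ) : ℝ × ℝ → ℝ := fun q => fderiv ℝ F q w

lemma dd_contDiff {n : ℕ} {F : ℝ × ℝ → ℝ} (w : ℝ × ℝ) (h : ContDiff ℝ ((n + 1 : ℕ) : ℕ∞) F) :
    ContDiff ℝ (n : ℕ∞) (dd w F) := by
  refine (h.fderiv_right (m := (n : ℕ∞)) ?_).clm_apply contDiff_const
  norm_cast

lemma dd_iter_contDiff {k : ℕ} : ∀ {n : ℕ} {F : ℝ × ℝ → ℝ} (w : ℝ × ℝ),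
    ContDiff ℝ ((n + k : ℕ) : ℕ∞) F → ContDiff ℝ (n : ℕ∞) ((dd w)^[k] F) := by
  induction k with
  | zero => intro n F w h; simpa using h
  | succ k ih =>
    intro n F w h
    rw [Function.iterate_succ_apply]
    exact ih w (dd_contDiff w (by simpa [add_assoc] using h))

lemma dd_comm {F : ℝ × ℝ → ℝ} (w z : ℝ × ℝ) (h : ContDiff ℝ ((2 : ℕ) : ℕ∞) F) :
    dd w (dd z F) = dd z (dd w F) := by
  have hd : Differentiable ℝ (fderiv ℝ F) :=
    (h.fderiv_right (m := 1) (by norm_cast)).differentiable (by norm_num)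
  have key : ∀ (a b : ℝ × ℝ) q, dd a (dd b F) q = fderiv ℝ (fderiv ℝ F) q a b := by
    intro a b q
    unfold dd
    have := (hd q).hasFDerivAt.clm_apply (hasFDerivAt_const b q)
    rw [this.fderiv]
    simp
  funext q
  rw [key, key]
  have hs : IsSymmSndFDerivAt ℝ F q := h.contDiffAt.isSymmSndFDerivAt (by simp)
  exact hs w z

lemma dd_iter_comm {a : ℕ} : ∀ {F : ℝ × ℝ → ℝ} (w z : ℝ × ℝ),
    ContDiff ℝ ((a + 1 : ℕ) : ℕ∞) F → dd z ((dd w)^[a] F) = (dd w)^[a] (dd z F) := by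
  induction a with
  | zero => intro F w z h; rfl
  | succ a ih =>
    intro F w z h
    rw [Function.iterate_succ_apply, Function.iterate_succ_apply, ih w z (dd_contDiff w h),
      dd_comm z w (h.of_le (by norm_cast; omega))]

lemma slice2 {F : ℝ × ℝ → ℝ} {b : ℕ} (u : ℝ) (h : ContDiff ℝ (b : ℕ∞) F) :
    iteratedDeriv b (fun v => F (u, v)) = fun v => (dd (0, 1))^[b] F (u, v) := by
  induction b with
  | zero => simp
  | succ b ih =>
    rw [iteratedDeriv_succ, ih (h.of_le (by norm_cast; omega))]
    funext v
    rw [Function.iterate_succ_apply']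
    have h1 : ContDiff ℝ ((1 : ℕ) : ℕ∞) ((dd (0, 1))^[b] F) :=
      dd_iter_contDiff _ (by rwa [add_comm])
    have h2 := (h1.differentiable (by norm_num) (u, v)).hasFDerivAt
    have h3 : HasDerivAt (fun v : ℝ => (u, v)) ((0 : ℝ), (1 : ℝ)) v :=
      (hasDerivAt_const v u).prodMk (hasDerivAt_id v)
    exact (h2.comp_hasDerivAt v h3).deriv

lemma slice1 {F : ℝ × ℝ → ℝ} {b : ℕ} (v : ℝ) (h : ContDiff ℝ (b : ℕ∞) F) :
    iteratedDeriv b (fun u => F (u, v)) = fun u => (dd (1, 0))^[b] F (u, v) := by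
  induction b with
  | zero => simp
  | succ b ih =>
    rw [iteratedDeriv_succ, ih (h.of_le (by norm_cast; omega))]
    funext u
    rw [Function.iterate_succ_apply']
    have h1 : ContDiff ℝ ((1 : ℕ) : ℕ∞) ((dd (1, 0))^[b] F) :=
      dd_iter_contDiff _ (by rwa [add_comm])
    have h2 := (h1.differentiable (by norm_num) (u, v)).hasFDerivAt
    have h3 : HasDerivAt (fun u : ℝ => (u, v)) ((1 : ℝ), (0 : ℝ)) u :=
      (hasDerivAt_id u).prodMk (hasDerivAt_const u v)
    exact (h2.comp_hasDerivAt u h3).deriv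

/-- mixed partials through directional derivatives -/
def PP (F : ℝ × ℝ → ℝ) (a b : ℕ) : ℝ × ℝ → ℝ := (dd (1, 0))^[a] ((dd (0, 1))^[b] F)

lemma pd_eq {g : ℝ → ℝ → ℝ} {a b : ℕ}
    (h : ContDiff ℝ ((a + b : ℕ) : ℕ∞) (fun q : ℝ × ℝ => g q.1 q.2)) (u v : ℝ) :
    pd a b g u v = PP (fun q : ℝ × ℝ => g q.1 q.2) a b (u, v) := by
  unfold pd PP
  have h2 := fun t => slice2 (b := b) t (h.of_le (by norm_cast; omega))
  simp only at h2
  have h3 : (fun t => iteratedDeriv b (g t) v) =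
      fun t => (dd (0, 1))^[b] (fun q : ℝ × ℝ => g q.1 q.2) (t, v) := by
    funext t
    exact congrFun (h2 t) v
  rw [h3, slice1 v (dd_iter_contDiff _ h)]

lemma PP_contDiff {F : ℝ × ℝ → ℝ} {a b n m : ℕ} (h : ContDiff ℝ (m : ℕ∞) F) (hm : n + a + b ≤ m) :
    ContDiff ℝ (n : ℕ∞) (PP F a b) :=
  dd_iter_contDiff _ (dd_iter_contDiff _ (h.of_le (by norm_cast)))

lemma PP_line {F : ℝ × ℝ → ℝ} {a b m : ℕ} (h : ContDiff ℝ (m : ℕ∞) F) (hm : a + b < m)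
    (y k : ℝ × ℝ) (s : ℝ) :
    HasDerivAt (fun s : ℝ => PP F a b (y + s • k))
      (k.1 * PP F (a + 1) b (y + s • k) + k.2 * PP F a (b + 1) (y + s • k)) s := by
  have h1 : ContDiff ℝ ((1 : ℕ) : ℕ∞) (PP F a b) := PP_contDiff h (by omega)
  have h2 := (h1.differentiable (by norm_num) (y + s • k)).hasFDerivAt
  have h3 : HasDerivAt (fun s : ℝ => y + s • k) k s := by
    simpa using ((hasDerivAt_id s).smul_const k).const_add y
  have h4 := h2.comp_hasDerivAt s h3
  have e1 : PP F (a + 1) b = dd (1, 0) (PP F a b) := by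
    unfold PP; rw [Function.iterate_succ_apply']
  have e2 : PP F a (b + 1) = dd (0, 1) (PP F a b) := by
    unfold PP
    have hc : ContDiff ℝ ((a + 1 : ℕ) : ℕ∞) ((dd (0, 1))^[b] F) :=
      dd_iter_contDiff _ (h.of_le (by norm_cast; omega))
    rw [Function.iterate_succ_apply' _ b, dd_iter_comm (a := a) (1, 0) (0, 1) hc]
  refine h4.congr_deriv ?_
  symm
  rw [e1, e2]
  unfold dd
  rw [← smul_eq_mul, ← smul_eq_mul, ← map_smul, ← map_smul, ← map_add]
  congr 1
  ext <;> simp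

/-- homogeneous Taylor terms -/
def SS (F : ℝ × ℝ → ℝ) (n : ℕ) (k z : ℝ × ℝ) : ℝ :=
  ∑ p ∈ Finset.HasAntidiagonal.antidiagonal n,
    PP F p.1 p.2 z * ((k.1 ^ p.1 / p.1.factorial) * (k.2 ^ p.2 / p.2.factorial))

lemma SS_deriv {F : ℝ × ℝ → ℝ} {n m : ℕ} (h : ContDiff ℝ (m : ℕ∞) F) (hm : n < m)
    (y k : ℝ × ℝ) (s : ℝ) :
    HasDerivAt (fun s : ℝ => SS F n k (y + s • k)) ((n + 1 : ℝ) * SS F (n + 1) k (y + s • k)) s := by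
  have h1 : HasDerivAt (fun s : ℝ => SS F n k (y + s • k))
      (∑ p ∈ Finset.HasAntidiagonal.antidiagonal n,
        (k.1 * PP F (p.1 + 1) p.2 (y + s • k) + k.2 * PP F p.1 (p.2 + 1) (y + s • k)) *
          ((k.1 ^ p.1 / p.1.factorial) * (k.2 ^ p.2 / p.2.factorial))) s := by
    unfold SS
    refine HasDerivAt.fun_sum fun p hp => ?_
    rw [Finset.HasAntidiagonal.mem_antidiagonal] at hp
    exact (PP_line h (by omega) y k s).mul_const _
  refine h1.congr_deriv ?_
  symm
  set z := y + s • k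
  set f : ℕ → ℕ → ℝ := fun a b =>
    PP F a b z * ((k.1 ^ a / a.factorial) * (k.2 ^ b / b.factorial)) with hf
  have e0 : (n + 1 : ℝ) * SS F (n + 1) k z =
      ∑ p ∈ Finset.HasAntidiagonal.antidiagonal (n + 1), (p.1 : ℝ) * f p.1 p.2 +
      ∑ p ∈ Finset.HasAntidiagonal.antidiagonal (n + 1), (p.2 : ℝ) * f p.1 p.2 := by
    unfold SS
    rw [Finset.mul_sum, ← Finset.sum_add_distrib]
    refine Finset.sum_congr rfl fun p hp => ?_
    rw [Finset.HasAntidiagonal.mem_antidiagonal] at hp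
    have : (p.1 : ℝ) + p.2 = n + 1 := by exact_mod_cast hp
    rw [← this, hf]; ring
  rw [e0, Finset.Nat.sum_antidiagonal_succ, Finset.Nat.sum_antidiagonal_succ']
  simp only [Nat.cast_zero, zero_mul, zero_add]
  rw [← Finset.sum_add_distrib]
  refine Finset.sum_congr rfl fun p hp => ?_
  simp only [hf, Nat.factorial_succ]
  push_cast
  field_simp
  ring

lemma taylor_deriv {F : ℝ × ℝ → ℝ} {n m : ℕ} (h : ContDiff ℝ (m : ℕ∞) F) (hm : n + 1 ≤ m)
    (y k : ℝ × ℝ) (s : ℝ) :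
    HasDerivAt (fun s : ℝ => ∑ j ∈ Finset.range (n + 1), (1 - s) ^ j * SS F j k (y + s • k))
      ((n + 1 : ℝ) * (1 - s) ^ n * SS F (n + 1) k (y + s • k)) s := by
  induction n with
  | zero => simpa using SS_deriv (n := 0) h (by omega) y k s
  | succ n ih =>
    have h1 := ih (by omega)
    have h2 := SS_deriv (n := n + 1) h (by omega) y k s
    have h3 : HasDerivAt (fun s : ℝ => (1 - s) ^ (n + 1)) (-((n + 1 : ℝ) * (1 - s) ^ n)) s := by
      have := ((hasDerivAt_id s).const_sub 1).pow (n + 1)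
      refine this.congr_deriv ?_
      simp
    have h4 := h1.add (h3.mul h2)
    simp only [Finset.sum_range_succ _ (n + 1)]
    refine h4.congr_deriv ?_
    push_cast
    ring

lemma SS_cont {F : ℝ × ℝ → ℝ} {n m : ℕ} (h : ContDiff ℝ (m : ℕ∞) F) (hm : n ≤ m) :
    Continuous (fun q : (ℝ × ℝ) × (ℝ × ℝ) => SS F n q.1 q.2) := by
  unfold SS
  refine continuous_finsetSum _ fun p hp => ?_
  rw [Finset.HasAntidiagonal.mem_antidiagonal] at hp
  have : Continuous (PP F p.1 p.2) := (PP_contDiff (n := 0) h (by omega)).continuous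
  fun_prop

lemma taylor {F : ℝ × ℝ → ℝ} {n : ℕ} (h : ContDiff ℝ ((n + 1 : ℕ) : ℕ∞) F) (x y : ℝ × ℝ) :
    F x - ∑ j ∈ Finset.range (n + 1), SS F j (x - y) y =
      ∫ s in (0 : ℝ)..1, (n + 1 : ℝ) * (1 - s) ^ n * SS F (n + 1) (x - y) (y + s • (x - y)) := by
  rw [intervalIntegral.integral_eq_sub_of_hasDerivAt
    (fun s _ => taylor_deriv h le_rfl y (x - y) s)]
  · congr 1
    · rw [Finset.sum_range_succ']
      simp [SS, PP]
    · simp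
  · have := SS_cont h le_rfl
    have h2 : Continuous fun s : ℝ => SS F (n + 1) (x - y) (y + s • (x - y)) :=
      this.comp (f := fun s : ℝ => (x - y, y + s • (x - y))) (by fun_prop)
    exact Continuous.intervalIntegrable (by fun_prop) _ _

end Census

namespace Census
open MeasureTheory

def QQ : Set (ℝ × ℝ) := (Set.Icc (0:ℝ) 1) ×ˢ (Set.Icc (0:ℝ) 1)

lemma QQ_compact : IsCompact QQ := isCompact_Icc.prod isCompact_Icc

lemma QQ_meas : MeasurableSet QQ := measurableSet_Icc.prod measurableSet_Icc

lemma QQ_vol : (volume : Measure (ℝ × ℝ)) QQ = 1 := by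
  rw [QQ, Measure.volume_eq_prod, Measure.prod_prod]
  simp

instance QQ_prob : IsProbabilityMeasure ((volume : Measure (ℝ × ℝ)).restrict QQ) :=
  ⟨by rw [Measure.restrict_apply_univ, QQ_vol]⟩

lemma QQ_int {f : ℝ × ℝ → ℝ} (hf : Continuous f) : IntegrableOn f QQ :=
  hf.continuousOn.integrableOn_compact QQ_compact

lemma scale_bound {f : ℝ × ℝ → ℝ} (hf : Continuous f) (h0 : ∀ y, 0 ≤ f y) {x : ℝ × ℝ}
    (hx : x ∈ QQ) {s : ℝ} (hs0 : 0 ≤ s) (hs1 : s < 1) :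
    ∫ y in QQ, f (y + s • (x - y)) ≤ ((1 - s) ^ 2)⁻¹ * ∫ y in QQ, f y := by
  have hpos : 0 < 1 - s := by linarith
  have hI : Integrable (QQ.indicator f) := (integrable_indicator_iff QQ_meas).2 (QQ_int hf)
  have hI2 : Integrable (fun z => QQ.indicator f (s • x + z)) := hI.comp_add_left (s • x)
  have hI3 : Integrable (fun z => QQ.indicator f (s • x + (1 - s) • z)) :=
    hI2.comp_smul hpos.ne'
  have hconv : Convex ℝ QQ := (convex_Icc _ _).prod (convex_Icc _ _)
  have e1 : ∫ z, QQ.indicator f (s • x + (1 - s) • z) = ((1 - s) ^ 2)⁻¹ * ∫ y in QQ, f y := by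
    rw [Measure.integral_comp_smul volume (fun z => QQ.indicator f (s • x + z)) (1 - s),
      integral_add_left_eq_self (fun z => QQ.indicator f z) (s • x), integral_indicator QQ_meas]
    simp
  rw [← e1, ← integral_indicator QQ_meas]
  refine integral_mono_of_nonneg (Filter.Eventually.of_forall fun y => ?_) hI3
    (Filter.Eventually.of_forall fun y => ?_)
  · exact Set.indicator_nonneg (fun _ _ => h0 _) _
  · by_cases hy : y ∈ QQ
    · have hz : s • x + (1 - s) • y ∈ QQ := hconv hx hy hs0 hpos.le (by ring)
      have e : y + s • (x - y) = s • x + (1 - s) • y := by module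
      simp only [Set.indicator_of_mem hy, Set.indicator_of_mem hz, e, le_refl]
    · simp only [Set.indicator_of_notMem hy]
      exact Set.indicator_nonneg (fun _ _ => h0 _) _

lemma cs_bound {f : ℝ × ℝ → ℝ} (hf : Continuous f) :
    (∫ y in QQ, |f y|) ^ 2 ≤ ∫ y in QQ, f y ^ 2 := by
  set c := ∫ y in QQ, |f y| with hc
  have h0 : 0 ≤ ∫ y in QQ, (|f y| - c) ^ 2 := integral_nonneg fun y => sq_nonneg _
  have e : ∫ y in QQ, (|f y| - c) ^ 2 = ∫ y in QQ, (f y ^ 2 - (2 * c) * |f y| + c ^ 2) := by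
    congr 1; funext y; rw [← sq_abs (f y)]; ring
  have i1 : Integrable (fun y => f y ^ 2) (volume.restrict QQ) := QQ_int (by fun_prop)
  have i2 : Integrable (fun y => (2 * c) * |f y|) (volume.restrict QQ) := QQ_int (by fun_prop)
  have i3 : Integrable (fun y => f y ^ 2 - (2 * c) * |f y|) (volume.restrict QQ) := i1.sub i2
  rw [e, integral_add i3 (integrable_const _), integral_sub i1 i2,
    integral_const_mul, ← hc] at h0
  simp at h0
  nlinarith

lemma PP_bound {f : ℝ × ℝ → ℝ} (hf : Continuous f) {W : ℝ} (hW : 0 ≤ W)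
    (hfW : ∫ y in QQ, f y ^ 2 ≤ W ^ 2) {x : ℝ × ℝ}
    (hx : x ∈ QQ) {s : ℝ} (hs0 : 0 ≤ s) (hs1 : s < 1) :
    (1 - s) * ∫ y in QQ, |f (y + s • (x - y))| ≤ W := by
  have hpos : 0 < 1 - s := by linarith
  have h1 := cs_bound (f := fun y => f (y + s • (x - y))) (by fun_prop)
  have h2 := scale_bound (f := fun y => f y ^ 2) (by fun_prop) (fun y => sq_nonneg _) hx hs0 hs1
  refine abs_le_of_sq_le_sq' ?_ hW |>.2
  rw [mul_pow]
  calc (1 - s) ^ 2 * (∫ y in QQ, |f (y + s • (x - y))|) ^ 2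
      ≤ (1 - s) ^ 2 * (((1 - s) ^ 2)⁻¹ * ∫ y in QQ, f y ^ 2) := by gcongr; exact h1.trans h2
    _ = ∫ y in QQ, f y ^ 2 := by field_simp
    _ ≤ _ := hfW

lemma SS_abs {F : ℝ × ℝ → ℝ} {n : ℕ} {k z : ℝ × ℝ} (h1 : |k.1| ≤ 1) (h2 : |k.2| ≤ 1) :
    |SS F n k z| ≤ ∑ p ∈ Finset.HasAntidiagonal.antidiagonal n, |PP F p.1 p.2 z| := by
  unfold SS
  refine (Finset.abs_sum_le_sum_abs _ _).trans (Finset.sum_le_sum fun p _ => ?_)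
  have key : ∀ (t : ℝ) (a : ℕ), |t| ≤ 1 → |t ^ a / a.factorial| ≤ 1 := by
    intro t a ht
    rw [abs_div, abs_pow, Nat.abs_cast]
    refine div_le_one_of_le₀ ?_ (by positivity)
    exact (pow_le_one₀ (abs_nonneg _) ht).trans (by exact_mod_cast Nat.factorial_pos a)
  rw [abs_mul, abs_mul]
  refine mul_le_of_le_one_right (abs_nonneg _) (mul_le_one₀ (key _ _ h1) (abs_nonneg _) (key _ _ h2))

lemma inner_bound {F : ℝ × ℝ → ℝ} {n : ℕ} (hn : 1 ≤ n) (h : ContDiff ℝ ((n + 1 : ℕ) : ℕ∞) F)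
    {W : ℝ} (hW : 0 ≤ W)
    (hFW : ∀ p ∈ Finset.HasAntidiagonal.antidiagonal (n + 1), ∫ y in QQ, PP F p.1 p.2 y ^ 2 ≤ W ^ 2)
    {x : ℝ × ℝ} (hx : x ∈ QQ) {s : ℝ} (hs0 : 0 ≤ s) (hs1 : s ≤ 1) :
    ‖∫ y in QQ, (n + 1 : ℝ) * (1 - s) ^ n * SS F (n + 1) (x - y) (y + s • (x - y))‖ ≤
      (n + 1) * (n + 2) * W := by
  rcases eq_or_lt_of_le hs1 with rfl | hs1
  · have : n ≠ 0 := by omega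
    simp [this]
    positivity
  have hpos : 0 < 1 - s := by linarith
  have hc : ∀ p ∈ Finset.HasAntidiagonal.antidiagonal (n + 1), Continuous (PP F p.1 p.2) := by
    intro p hp
    rw [Finset.HasAntidiagonal.mem_antidiagonal] at hp
    exact (PP_contDiff (n := 0) h (by omega)).continuous
  have hci : ∀ p ∈ Finset.HasAntidiagonal.antidiagonal (n + 1),
      Integrable (fun y => |PP F p.1 p.2 (y + s • (x - y))|) (volume.restrict QQ) := by
    intro p hp
    have := hc p hp
    exact QQ_int (by fun_prop)
  have h1 : ‖∫ y in QQ, (n + 1 : ℝ) * (1 - s) ^ n * SS F (n + 1) (x - y) (y + s • (x - y))‖ ≤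
      ∫ y in QQ, (n + 1 : ℝ) * (1 - s) ^ n *
        ∑ p ∈ Finset.HasAntidiagonal.antidiagonal (n + 1), |PP F p.1 p.2 (y + s • (x - y))| := by
    refine norm_integral_le_of_norm_le ((integrable_finsetSum _ hci).const_mul _) ?_
    refine (ae_restrict_iff' QQ_meas).2 (Filter.Eventually.of_forall fun y hy => ?_)
    rw [Real.norm_eq_abs, abs_mul, abs_of_nonneg (by positivity : 0 ≤ (n + 1 : ℝ) * (1 - s) ^ n)]
    gcongr
    obtain ⟨⟨a1, a2⟩, a3, a4⟩ := hx
    obtain ⟨⟨b1, b2⟩, b3, b4⟩ := hy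
    refine SS_abs ?_ ?_ <;> rw [abs_le] <;> constructor <;> simp <;> linarith
  refine h1.trans ?_
  rw [integral_const_mul, integral_finsetSum _ hci]
  obtain ⟨k, rfl⟩ : ∃ k, n = k + 1 := ⟨n - 1, by omega⟩
  set T := ∑ p ∈ Finset.HasAntidiagonal.antidiagonal (k + 1 + 1),
    ∫ y in QQ, |PP F p.1 p.2 (y + s • (x - y))|
  have hT : (1 - s) * T ≤ ((k + 1 : ℕ) + 2) * W := by
    rw [Finset.mul_sum]
    refine (Finset.sum_le_card_nsmul _ _ W fun p hp =>
      PP_bound (hc p hp) hW (hFW p hp) hx hs0 hs1).trans ?_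
    rw [Finset.Nat.card_antidiagonal, nsmul_eq_mul]
    push_cast
    apply le_of_eq; ring
  have hp1 : (1 - s) ^ k ≤ 1 := pow_le_one₀ hpos.le (by linarith)
  calc ((k + 1 : ℕ) + 1 : ℝ) * (1 - s) ^ (k + 1) * T
      = ((k + 1 : ℕ) + 1 : ℝ) * ((1 - s) ^ k * ((1 - s) * T)) := by ring
    _ ≤ ((k + 1 : ℕ) + 1 : ℝ) * (1 * (((k + 1 : ℕ) + 2) * W)) := by
        gcongr
    _ = _ := by ring

lemma main_bound {F : ℝ × ℝ → ℝ} {n : ℕ} (hn : 1 ≤ n) (h : ContDiff ℝ ((n + 1 : ℕ) : ℕ∞) F)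
    {W : ℝ} (hW : 0 ≤ W)
    (hFW : ∀ p ∈ Finset.HasAntidiagonal.antidiagonal (n + 1), ∫ y in QQ, PP F p.1 p.2 y ^ 2 ≤ W ^ 2)
    {x : ℝ × ℝ} (hx : x ∈ QQ) :
    |F x - ∫ y in QQ, ∑ j ∈ Finset.range (n + 1), SS F j (x - y) y| ≤ (n + 1) * (n + 2) * W := by
  have hTc : Continuous fun y => ∑ j ∈ Finset.range (n + 1), SS F j (x - y) y := by
    refine continuous_finsetSum _ fun j hj => ?_
    rw [Finset.mem_range] at hj
    exact (SS_cont (n := j) h (by omega)).comp (f := fun y : ℝ × ℝ => (x - y, y)) (by fun_prop)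
  have e1 : F x - ∫ y in QQ, ∑ j ∈ Finset.range (n + 1), SS F j (x - y) y =
      ∫ y in QQ, (F x - ∑ j ∈ Finset.range (n + 1), SS F j (x - y) y) := by
    rw [integral_sub (integrable_const _) (QQ_int hTc)]
    simp
  rw [e1]
  simp_rw [taylor h, intervalIntegral.integral_of_le zero_le_one]
  rw [integral_integral_swap, ← Real.norm_eq_abs]
  · refine (norm_setIntegral_le_of_norm_le_const (C := (n + 1) * (n + 2) * W) (by simp)
      fun s hs => ?_).trans ?_
    · exact inner_bound hn h hW hFW hx hs.1.le hs.2
    · simp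
  · rw [Measure.prod_restrict]
    have hS := (SS_cont h le_rfl).comp
      (f := fun q : (ℝ × ℝ) × ℝ => (x - q.1, q.1 + q.2 • (x - q.1))) (by fun_prop)
    have hK : Continuous (Function.uncurry fun (y : ℝ × ℝ) (s : ℝ) =>
        (n + 1 : ℝ) * (1 - s) ^ n * SS F (n + 1) (x - y) (y + s • (x - y))) := by
      refine Continuous.mul (by fun_prop) hS
    refine IntegrableOn.mono_set
      (hK.continuousOn.integrableOn_compact (QQ_compact.prod (isCompact_Icc (a := (0:ℝ)) (b := 1))))
      (Set.prod_mono le_rfl Set.Ioc_subset_Icc_self)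

end Census

namespace Census
open MeasureTheory

lemma pow_expand {m a : ℕ} (ha : a < m) (x y : ℝ) :
    (x - y) ^ a = ∑ i : Fin m, (a.choose i * (-y) ^ (a - (i : ℕ))) * x ^ (i : ℕ) := by
  rw [Fin.sum_univ_eq_sum_range (fun i => ((a.choose i : ℝ) * (-y) ^ (a - i)) * x ^ i) m,
    sub_eq_add_neg, add_pow]
  have hs : Finset.range (a + 1) ⊆ Finset.range m := by
    intro i hi; rw [Finset.mem_range] at *; omega
  rw [← Finset.sum_subset hs]
  · exact Finset.sum_congr rfl fun i _ => by ring
  · intro i _ hi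
    rw [Finset.mem_range] at hi
    rw [Nat.choose_eq_zero_of_lt (by omega)]
    simp

/-- coefficients of the Taylor polynomial in the monomial basis -/
def coef (F : ℝ × ℝ → ℝ) (m i j : ℕ) (y : ℝ × ℝ) : ℝ :=
  ∑ k ∈ Finset.range m, ∑ p ∈ Finset.HasAntidiagonal.antidiagonal k,
    PP F p.1 p.2 y / (p.1.factorial * p.2.factorial) *
      (p.1.choose i * (-y.1) ^ (p.1 - i)) * (p.2.choose j * (-y.2) ^ (p.2 - j))

lemma coef_cont {F : ℝ × ℝ → ℝ} {m : ℕ} (h : ContDiff ℝ (m : ℕ∞) F) (i j : ℕ) :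
    Continuous (coef F m i j) := by
  unfold coef
  refine continuous_finsetSum _ fun k hk => continuous_finsetSum _ fun p hp => ?_
  rw [Finset.HasAntidiagonal.mem_antidiagonal] at hp
  rw [Finset.mem_range] at hk
  have : Continuous (PP F p.1 p.2) := (PP_contDiff (n := 0) h (by omega)).continuous
  fun_prop

lemma coef_zero {F : ℝ × ℝ → ℝ} {m i j : ℕ} (hij : m ≤ i + j) (y : ℝ × ℝ) :
    coef F m i j y = 0 := by
  unfold coef
  refine Finset.sum_eq_zero fun k hk => Finset.sum_eq_zero fun p hp => ?_
  rw [Finset.HasAntidiagonal.mem_antidiagonal] at hp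
  rw [Finset.mem_range] at hk
  rcases lt_or_ge p.1 i with h | h
  · rw [Nat.choose_eq_zero_of_lt h]; simp
  · rw [Nat.choose_eq_zero_of_lt (show p.2 < j by omega)]; simp

lemma taylor_expand (F : ℝ × ℝ → ℝ) (m : ℕ) (x y : ℝ × ℝ) :
    ∑ k ∈ Finset.range m, SS F k (x - y) y =
      ∑ i : Fin m, ∑ j : Fin m, coef F m i j y * x.1 ^ (i : ℕ) * x.2 ^ (j : ℕ) := by
  have e : ∀ k ∈ Finset.range m, SS F k (x - y) y =
      ∑ i : Fin m, ∑ j : Fin m, (∑ p ∈ Finset.HasAntidiagonal.antidiagonal k,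
        PP F p.1 p.2 y / (p.1.factorial * p.2.factorial) *
        (p.1.choose i * (-y.1) ^ (p.1 - (i : ℕ))) * (p.2.choose j * (-y.2) ^ (p.2 - (j : ℕ)))) *
          x.1 ^ (i : ℕ) * x.2 ^ (j : ℕ) := by
    intro k hk
    rw [Finset.mem_range] at hk
    simp_rw [Finset.sum_mul]
    have e2 : ∀ i : Fin m, ∑ j : Fin m, ∑ p ∈ Finset.HasAntidiagonal.antidiagonal k,
        PP F p.1 p.2 y / (p.1.factorial * p.2.factorial) *
        (p.1.choose i * (-y.1) ^ (p.1 - (i : ℕ))) * (p.2.choose j * (-y.2) ^ (p.2 - (j : ℕ))) *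
          x.1 ^ (i : ℕ) * x.2 ^ (j : ℕ) = ∑ p ∈ Finset.HasAntidiagonal.antidiagonal k, ∑ j : Fin m,
        PP F p.1 p.2 y / (p.1.factorial * p.2.factorial) *
        (p.1.choose i * (-y.1) ^ (p.1 - (i : ℕ))) * (p.2.choose j * (-y.2) ^ (p.2 - (j : ℕ))) *
          x.1 ^ (i : ℕ) * x.2 ^ (j : ℕ) := fun i => Finset.sum_comm
    rw [Finset.sum_congr rfl fun i _ => e2 i, Finset.sum_comm]
    unfold SS
    refine Finset.sum_congr rfl fun p hp => ?_
    rw [Finset.HasAntidiagonal.mem_antidiagonal] at hp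
    rw [Prod.fst_sub, Prod.snd_sub, pow_expand (m := m) (show p.1 < m by omega),
      pow_expand (m := m) (show p.2 < m by omega), div_mul_div_comm, Finset.sum_mul_sum,
      Finset.sum_div, Finset.mul_sum]
    refine Finset.sum_congr rfl fun i _ => ?_
    rw [Finset.sum_div, Finset.mul_sum]
    refine Finset.sum_congr rfl fun j _ => ?_
    ring
  rw [Finset.sum_congr rfl e, Finset.sum_comm]
  refine Finset.sum_congr rfl fun i _ => ?_
  rw [Finset.sum_comm]
  refine Finset.sum_congr rfl fun j _ => ?_
  unfold coef
  rw [Finset.sum_mul, Finset.sum_mul]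

lemma iteratedDeriv_monomial_sum {m : ℕ} (b : ℕ) (c : Fin m → ℝ) (v : ℝ) :
    iteratedDeriv b (fun v : ℝ => ∑ j, c j * v ^ (j : ℕ)) v =
      ∑ j, c j * (((j : ℕ).descFactorial b : ℝ) * v ^ ((j : ℕ) - b)) := by
  rw [iteratedDeriv_fun_sum (fun j _ => by fun_prop)]
  refine Finset.sum_congr rfl fun j _ => ?_
  rw [iteratedDeriv_const_mul_field]
  rw [iteratedDeriv_pow]

lemma pd_sub_poly {m : ℕ} {g : ℝ → ℝ → ℝ} {a b : ℕ} (hab : a + b = m)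
    (h : ContDiff ℝ (m : ℕ∞) (fun q : ℝ × ℝ => g q.1 q.2)) (c : Fin m → Fin m → ℝ)
    (hc : ∀ i j : Fin m, m ≤ (i : ℕ) + j → c i j = 0) (u v : ℝ) :
    pd a b (fun u v => g u v - ∑ i, ∑ j, c i j * u ^ (i : ℕ) * v ^ (j : ℕ)) u v = pd a b g u v := by
  have hcd : ContDiff ℝ (a : ℕ∞) (fun t => iteratedDeriv b (g t) v) := by
    have h3 : (fun t => iteratedDeriv b (g t) v) =
        fun t => (dd (0, 1))^[b] (fun q : ℝ × ℝ => g q.1 q.2) (t, v) := by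
      funext t
      exact congrFun (slice2 (b := b) t (h.of_le (by norm_cast; omega))) v
    rw [h3]
    have h4 : ContDiff ℝ (a : ℕ∞) ((dd (0, 1))^[b] (fun q : ℝ × ℝ => g q.1 q.2)) :=
      dd_iter_contDiff _ (by rwa [hab])
    exact h4.comp (f := fun t : ℝ => (t, v)) (by fun_prop)
  have e1 : ∀ t, iteratedDeriv b (fun v => g t v - ∑ i, ∑ j, c i j * t ^ (i : ℕ) * v ^ (j : ℕ)) v =
      iteratedDeriv b (g t) v - ∑ i : Fin m,
        (∑ j : Fin m, c i j * (((j : ℕ).descFactorial b : ℝ) * v ^ ((j : ℕ) - b))) * t ^ (i : ℕ) := by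
    intro t
    have hg : ContDiff ℝ (b : ℕ∞) (g t) := by
      have := h.comp (f := fun v : ℝ => (t, v)) (by fun_prop)
      exact ContDiff.of_le this (by norm_cast; omega)
    have hs := iteratedDeriv_sub (x := v) (n := b) (f := g t)
      (g := fun v => ∑ i : Fin m, ∑ j : Fin m, c i j * t ^ (i : ℕ) * v ^ (j : ℕ))
      hg.contDiffAt (by fun_prop)
    refine hs.trans ?_
    congr 1
    rw [iteratedDeriv_fun_sum (fun j _ => by fun_prop)]
    refine Finset.sum_congr rfl fun i _ => ?_
    rw [iteratedDeriv_monomial_sum b (fun j => c i j * t ^ (i : ℕ)), Finset.sum_mul]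
    exact Finset.sum_congr rfl fun j _ => by ring
  unfold pd
  simp_rw [e1]
  have hs := iteratedDeriv_sub (x := u) (n := a) (f := fun t => iteratedDeriv b (g t) v)
      (g := fun t => ∑ i : Fin m,
        (∑ j : Fin m, c i j * (((j : ℕ).descFactorial b : ℝ) * v ^ ((j : ℕ) - b))) * t ^ (i : ℕ))
      hcd.contDiffAt (by fun_prop)
  refine hs.trans ?_
  rw [iteratedDeriv_monomial_sum a, sub_eq_self]
  refine Finset.sum_eq_zero fun i _ => ?_
  rw [Finset.sum_mul]
  refine Finset.sum_eq_zero fun j _ => ?_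
  rcases le_or_gt m ((i : ℕ) + j) with hij | hij
  · rw [hc i j hij]; simp
  · rcases lt_or_ge (i : ℕ) a with hi | hi
    · rw [Nat.descFactorial_of_lt hi]; simp
    · rw [Nat.descFactorial_of_lt (show (j : ℕ) < b by omega)]; simp

end Census

open Census in
/-- polynomial approximation in sup-norm controlled by the `m`-th
order smoothness seminorm.  For every `m ≥ 2` there is `C` depending only on `m` such
that every `m`-times continuously differentiable `g : [0,1]² → ℝ` admits a polynomial
`p(u,v)` of degree at most `m-1` in each variable with
`sup_{[0,1]²} |g - p| ≤ C Ω̃(g)`, and the remainder `g̃ = g - p` satisfies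
`Ω̃(g̃) = Ω̃(g)`. -/
theorem statement10 (m : ℕ) (hm : 2 ≤ m) :
    ∃ C : ℝ, 0 < C ∧
      ∀ g : ℝ → ℝ → ℝ, ContDiff ℝ (m : ℕ∞) (fun q : ℝ × ℝ => g q.1 q.2) →
        ∃ c : Fin m → Fin m → ℝ,
          (∀ u ∈ Set.Icc (0:ℝ) 1, ∀ v ∈ Set.Icc (0:ℝ) 1,
            |g u v - ∑ a, ∑ b, c a b * u ^ (a : ℕ) * v ^ (b : ℕ)| ≤
              C * OmegaTilde2M m g) ∧
          OmegaTilde2M m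
              (fun u v => g u v - ∑ a, ∑ b, c a b * u ^ (a : ℕ) * v ^ (b : ℕ)) =
            OmegaTilde2M m g := by
  obtain ⟨n, rfl⟩ : ∃ n, m = n + 1 := ⟨m - 1, by omega⟩
  refine ⟨(n + 1) * (n + 2), by positivity, fun g hg => ?_⟩
  set F : ℝ × ℝ → ℝ := fun q => g q.1 q.2 with hF
  refine ⟨fun i j => ∫ y in QQ, coef F (n + 1) i j y, ?_, ?_⟩
  · intro u hu v hv
    have hnn : ∀ a ∈ Finset.range (n + 1 + 1),
        0 ≤ ∫ q in QQ, (pd a (n + 1 - a) g q.1 q.2) ^ 2 :=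
      fun a _ => MeasureTheory.integral_nonneg fun q => sq_nonneg _
    have hΩ : 0 ≤ Omega2M (n + 1) g := Finset.sum_nonneg hnn
    have hb := main_bound (F := F) (n := n) (by omega) hg (W := OmegaTilde2M (n + 1) g)
      (Real.sqrt_nonneg _) (by
        intro p hp
        rw [Finset.HasAntidiagonal.mem_antidiagonal] at hp
        rw [OmegaTilde2M, Real.sq_sqrt hΩ]
        have h1 := Finset.single_le_sum hnn (Finset.mem_range.2 (show p.1 < n + 1 + 1 by omega))
        refine le_trans (le_of_eq ?_) h1
        congr 1
        funext q
        have e : n + 1 - p.1 = p.2 := by omega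
        rw [e, pd_eq (by rw [hp]; exact hg)])
      (x := (u, v)) ⟨hu, hv⟩
    have e : ∫ y in QQ, ∑ j ∈ Finset.range (n + 1), SS F j ((u, v) - y) y =
        ∑ i : Fin (n + 1), ∑ j : Fin (n + 1),
          (∫ y in QQ, coef F (n + 1) i j y) * u ^ (i : ℕ) * v ^ (j : ℕ) := by
      simp_rw [taylor_expand]
      have hi : ∀ i j : Fin (n + 1), MeasureTheory.Integrable
          (fun y => coef F (n + 1) i j y * u ^ (i : ℕ) * v ^ (j : ℕ))
          (MeasureTheory.volume.restrict QQ) := by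
        intro i j
        have := coef_cont hg i j
        exact QQ_int (by fun_prop)
      rw [MeasureTheory.integral_finsetSum _
        (fun i _ => MeasureTheory.integrable_finsetSum _ fun j _ => hi i j)]
      refine Finset.sum_congr rfl fun i _ => ?_
      rw [MeasureTheory.integral_finsetSum _ (fun j _ => hi i j)]
      refine Finset.sum_congr rfl fun j _ => ?_
      rw [MeasureTheory.integral_mul_const, MeasureTheory.integral_mul_const]
    rw [e] at hb
    exact hb
  · unfold OmegaTilde2M Omega2M
    congr 1
    refine Finset.sum_congr rfl fun a ha => ?_
    rw [Finset.mem_range] at ha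
    congr 1
    funext q
    rw [pd_sub_poly (by omega) hg]
    intro i j hij
    simp [coef_zero hij]
end
end
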